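/- Let Ω be a compact metric space and T : Ω → Ω a homeomorphism such that (Ω,T) is minimal (every T-orbit is dense in Ω). Let A : Ω → SL(2,ℝ) be continuous and suppose that the limit lim_{n→∞} (1/n) log‖A(n,ω)‖ exists for every ω ∈ Ω. Then A is uniform: there is Λ ∈ ℝ such that (1/n) log‖A(n,ω)‖ → Λ as n → ∞ uniformly in ω ∈ Ω. -/

import Mathlib

open Filter Topology MeasureTheory

noncomputable section

abbrev SL2 := Matrix.SpecialLinearGroup (Fin 2) ℝ

/-- Operator norm of a 2×2 real matrix acting on Euclidean ℝ². -/
def matNorm (M : Matrix (Fin 2) (Fin 2) ℝ) : ℝ :=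
  ‖LinearMap.toContinuousLinearMap (Matrix.toEuclideanLin M)‖

/-- Norm of an element of SL(2,ℝ). -/
def slNorm (M : SL2) : ℝ := matNorm (M : Matrix (Fin 2) (Fin 2) ℝ)

/-- Action of an SL(2,ℝ) matrix on a euclidean vector. -/
def slAct (M : SL2) (v : EuclideanSpace ℝ (Fin 2)) : EuclideanSpace ℝ (Fin 2) :=
  Matrix.toEuclideanLin (M : Matrix (Fin 2) (Fin 2) ℝ) v

variable {𝒜 : Type*}

/-- The shift by `k` on two-sided sequences; `shift 1` is the left shift `T`. -/
def shift (k : ℤ) (ω : ℤ → 𝒜) : ℤ → 𝒜 := fun n => ω (n + k)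

/-- `Ω ⊆ 𝒜^ℤ` is a subshift: nonempty, closed, invariant under the shift and its inverse. -/
structure IsSubshift [TopologicalSpace 𝒜] (Ω : Set (ℤ → 𝒜)) : Prop where
  nonempty : Ω.Nonempty
  closed : IsClosed Ω
  shift_mem : ∀ ω ∈ Ω, shift 1 ω ∈ Ω
  shift_neg_mem : ∀ ω ∈ Ω, shift (-1) ω ∈ Ω

/-- The word `ω(k) ω(k+1) ⋯ ω(k+n-1)`. -/
def word (ω : ℤ → 𝒜) (k : ℤ) (n : ℕ) : List 𝒜 := (List.range n).map fun i => ω (k + i)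

/-- `v` occurs in `ω` at position `k`. -/
def occursAt (v : List 𝒜) (ω : ℤ → 𝒜) (k : ℤ) : Prop := v = word ω k v.length

/-- The words of length `n` occurring in elements of `Ω`. -/
def WordsN (Ω : Set (ℤ → 𝒜)) (n : ℕ) : Set (List 𝒜) :=
  {v | ∃ ω ∈ Ω, ∃ k : ℤ, v = word ω k n}

/-- The (nonempty) finite words occurring in elements of `Ω`. -/
def Words (Ω : Set (ℤ → 𝒜)) : Set (List 𝒜) :=
  {v | 1 ≤ v.length ∧ v ∈ WordsN Ω v.length}

/-- `A` is locally constant on `Ω`: its value depends only on a finite window around 0. -/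
def LocConstOn (Ω : Set (ℤ → 𝒜)) {β : Type*} (A : (ℤ → 𝒜) → β) : Prop :=
  ∃ N : ℕ, ∀ ω ∈ Ω, ∀ ρ ∈ Ω, (∀ i : ℤ, |i| ≤ (N : ℤ) → ω i = ρ i) → A ω = A ρ

/-- The positive part of the cocycle: `cocycleP A n ω = A(T^{n-1}ω) ⋯ A(ω)`. -/
def cocycleP (A : (ℤ → 𝒜) → SL2) : ℕ → (ℤ → 𝒜) → SL2
  | 0, _ => 1
  | n + 1, ω => A (shift n ω) * cocycleP A n ω

/-- The full cocycle over the shift, `n ∈ ℤ`. -/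
def cocycle (A : (ℤ → 𝒜) → SL2) (n : ℤ) (ω : ℤ → 𝒜) : SL2 :=
  if 0 ≤ n then cocycleP A n.toNat ω else (cocycleP A (-n).toNat (shift n ω))⁻¹

/-- `A` is uniform on `Ω`: `(1/n) log‖A(n,ω)‖` converges uniformly on `Ω`. -/
def IsUniform (Ω : Set (ℤ → 𝒜)) (A : (ℤ → 𝒜) → SL2) : Prop :=
  ∃ Λ : ℝ, TendstoUniformlyOn
    (fun (n : ℕ) (ω : ℤ → 𝒜) => Real.log (slNorm (cocycle A n ω)) / n)
    (fun _ => Λ) atTop Ω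

/-- The number of occurrences of `v` in `ω(1)⋯ω(n)`. -/
def occCount (v : List 𝒜) (ω : ℤ → 𝒜) (n : ℕ) : ℕ :=
  Set.ncard {k : ℤ | 1 ≤ k ∧ k + v.length ≤ (n : ℤ) + 1 ∧ occursAt v ω k}

/-- Uniform existence of word frequencies (unique ergodicity). -/
def UniformWordFreq (Ω : Set (ℤ → 𝒜)) : Prop :=
  ∀ v ∈ Words Ω, ∃ ν : ℝ, TendstoUniformlyOn
    (fun (n : ℕ) (ω : ℤ → 𝒜) => (occCount v ω n : ℝ) / n) (fun _ => ν) atTop Ω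

/-- Minimality: every orbit is dense in `Ω`. -/
def IsMinimalSubshift [TopologicalSpace 𝒜] (Ω : Set (ℤ → 𝒜)) : Prop :=
  ∀ ω ∈ Ω, ∀ ρ ∈ Ω, ρ ∈ closure {σ : ℤ → 𝒜 | ∃ k : ℤ, σ = shift k ω}

/-- Condition (α): for all large `n`, the words of length `n` of `Ω` are exactly the
words `lead j (-k+1) ⋯ lead j (-k+n)`, `0 ≤ k ≤ n`, of the leading words. -/
def CondAlpha (Ω : Set (ℤ → 𝒜)) {r : ℕ} (lead : Fin r → (ℤ → 𝒜)) : Prop :=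
  (∀ j, lead j ∈ Ω) ∧ ∃ N : ℕ, ∀ n : ℕ, N ≤ n →
    WordsN Ω n = {v | ∃ j : Fin r, ∃ k : ℕ, k ≤ n ∧ v = word (lead j) (1 - (k : ℤ)) n}

/-- Condition (β): for every locally constant cocycle the Lyapunov limits along the
leading words exist in both time directions and all have the same value. -/
def CondBeta (Ω : Set (ℤ → 𝒜)) {r : ℕ} (lead : Fin r → (ℤ → 𝒜)) : Prop :=
  ∀ A : (ℤ → 𝒜) → SL2, LocConstOn Ω A → ∃ Λ : ℝ, ∀ j : Fin r,
    Tendsto (fun n : ℕ => Real.log (slNorm (cocycle A n (lead j))) / n) atTop (𝓝 Λ) ∧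
    Tendsto (fun n : ℕ => Real.log (slNorm (cocycle A (-(n : ℤ)) (lead j))) / n) atTop (𝓝 Λ)

/-- Condition (γ): along the leading words, for every locally constant cocycle and every
nonzero vector, at most one of the two one-sided exponents is negative. -/
def CondGamma (Ω : Set (ℤ → 𝒜)) {r : ℕ} (lead : Fin r → (ℤ → 𝒜)) : Prop :=
  ∀ A : (ℤ → 𝒜) → SL2, LocConstOn Ω A → ∀ j : Fin r,
    ∀ v : EuclideanSpace ℝ (Fin 2), v ≠ 0 →
    ¬ (limsup (fun n : ℕ => Real.log ‖slAct (cocycle A n (lead j)) v‖ / n) atTop < 0 ∧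
       limsup (fun n : ℕ => Real.log ‖slAct (cocycle A (-(n : ℤ)) (lead j)) v‖ / n) atTop < 0)

/-- The leading sequence condition (LSC). -/
def SatisfiesLSC (Ω : Set (ℤ → 𝒜)) : Prop :=
  ∃ (r : ℕ) (lead : Fin r → (ℤ → 𝒜)), CondAlpha Ω lead ∧ CondBeta Ω lead ∧ CondGamma Ω lead

/-- `F` is subadditive on the words of `Ω`. -/
def SubadditiveOn (Ω : Set (ℤ → 𝒜)) (F : List 𝒜 → ℝ) : Prop :=
  ∀ x y : List 𝒜, x ∈ Words Ω → y ∈ Words Ω → (x ++ y) ∈ Words Ω → F (x ++ y) ≤ F x + F y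

/-- `Fb` is the asymptotic mean `lim_n max { F x / n : x ∈ W(Ω)_n }` of `F`. -/
def IsAsympMean (Ω : Set (ℤ → 𝒜)) (F : List 𝒜 → ℝ) (Fb : ℝ) : Prop :=
  Tendsto (fun n : ℕ => sSup ((fun x => F x / n) '' WordsN Ω n)) atTop (𝓝 Fb)

/-- Maximal number of pairwise disjoint occurrences of `v` in `ω(1)⋯ω(n)`. -/
def disjCount (v : List 𝒜) (ω : ℤ → 𝒜) (n : ℕ) : ℕ :=
  sSup {m : ℕ | ∃ S : Finset ℤ, S.card = m ∧
    (∀ k ∈ S, 1 ≤ k ∧ k + v.length ≤ (n : ℤ) + 1 ∧ occursAt v ω k) ∧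
    (∀ k ∈ S, ∀ l ∈ S, k ≠ l → (v.length : ℤ) ≤ |k - l|)}

/-- Condition (PQ) for the one-sided word `p(1)p(2)⋯`. -/
def CondPQ (p : ℤ → 𝒜) : Prop :=
  ∃ c : ℝ, 0 < c ∧ ∀ m : ℕ, 1 ≤ m →
    c ≤ liminf (fun n : ℕ => (m : ℝ) / n * disjCount (word p 1 m) p n) atTop

/-- ℓ²(ℤ) over the reals. -/
abbrev Ell2Z : Type := lp (fun _ : ℤ => ℝ) 2

/-- `H` acts as the Jacobi operator with coefficients `f, g` at `ω`. -/
def IsJacobiAt (f g : (ℤ → 𝒜) → ℝ) (ω : ℤ → 𝒜) (H : Ell2Z →L[ℝ] Ell2Z) : Prop :=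
  ∀ u : Ell2Z, ∀ n : ℤ,
    (H u : ∀ _ : ℤ, ℝ) n =
      f (shift n ω) * (u : ∀ _ : ℤ, ℝ) (n - 1) + f (shift (n + 1) ω) * (u : ∀ _ : ℤ, ℝ) (n + 1)
        + g (shift n ω) * (u : ∀ _ : ℤ, ℝ) n

/-- The pair `(f,g)` is periodic on `Ω`. -/
def PeriodicPair (Ω : Set (ℤ → 𝒜)) (f g : (ℤ → 𝒜) → ℝ) : Prop :=
  ∃ P : ℕ, 1 ≤ P ∧ ∀ ω ∈ Ω, f (shift (P : ℤ) ω) = f ω ∧ g (shift (P : ℤ) ω) = g ω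

/-- `S ⊆ ℝ` is a Cantor set of Lebesgue measure zero: compact, empty interior,
no isolated points, Lebesgue measure zero. -/
def IsMeasureZeroCantor (S : Set ℝ) : Prop :=
  IsCompact S ∧ interior S = ∅ ∧ Perfect S ∧ volume S = 0

/-- `n` copies of `x` separated by `n-1` copies of the letter `l`. -/
def sepJoin (x : List 𝒜) (l : 𝒜) (m : ℕ) : List 𝒜 :=
  (List.replicate (m - 1) (x ++ [l])).flatten ++ x

/-- `Blk a nseq (k+1)` is the block `block(k)` of the simple Toeplitz construction
(with `Blk a nseq 0 = block(-1) = ε`). -/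
def Blk (a : ℕ → 𝒜) (nseq : ℕ → ℕ) : ℕ → List 𝒜
  | 0 => []
  | k + 1 => sepJoin (Blk a nseq k) (a k) (nseq k)

/-- `p(1)p(2)⋯` is the one-sided word `block(∞)`: every block is a prefix of it. -/
def IsBlockInf (a : ℕ → 𝒜) (nseq : ℕ → ℕ) (p : ℤ → 𝒜) : Prop :=
  ∀ k : ℕ, word p 1 (Blk a nseq k).length = Blk a nseq k

/-- The simple Toeplitz subshift generated by `block(∞) = p(1)p(2)⋯`: all two-sided
sequences whose finite subwords all occur in `block(∞)`. -/
def toeplitzΩ (p : ℤ → 𝒜) : Set (ℤ → 𝒜) :=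
  {ω | ∀ (i : ℤ) (n : ℕ), ∃ l : ℤ, 1 ≤ l ∧ word ω i n = word p l n}

/-- The eventual alphabet: letters occurring infinitely often in `(a_k)`. -/
def EvAlph (a : ℕ → 𝒜) : Set 𝒜 := {x | ∀ K : ℕ, ∃ k, K ≤ k ∧ a k = x}

/-- The leading word `p^R v | p`: equals `p(n+1)` for `n ≥ 0`, carries the word `v` on
positions `-|v|, …, -1`, and equals `p(-(n+|v|))` for `n < -|v|`. -/
def leadWordGen (p : ℤ → 𝒜) (v : List 𝒜) : ℤ → 𝒜 := fun n =>
  if 0 ≤ n then p (n + 1)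
  else if -(v.length : ℤ) ≤ n then v.getD (n + v.length).toNat (p 1)
  else p (-(n + v.length))

/-- The Gauss map. -/
def gaussMap (x : ℝ) : ℝ := 1 / x - ⌊1 / x⌋

/-- `cfSeq α n` is the continued fraction coefficient `a_{n+1}` of `α`. -/
def cfSeq (α : ℝ) (n : ℕ) : ℕ := ⌊1 / (gaussMap^[n] α)⌋₊

/-- The standard Sturmian words: `sturmW α (n+1) = s_n`, `sturmW α 0 = s_{-1} = 1`,
`sturmW α 1 = s_0 = 0`, `s_1 = s_0^{a_1 - 1} s_{-1}`, `s_n = s_{n-1}^{a_n} s_{n-2}`. -/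
def sturmW (α : ℝ) : ℕ → List (Fin 2)
  | 0 => [1]
  | 1 => [0]
  | 2 => List.replicate (cfSeq α 0 - 1) (0 : Fin 2) ++ [1]
  | n + 3 => (List.replicate (cfSeq α (n + 1)) (sturmW α (n + 2))).flatten ++ sturmW α (n + 1)

/-- The Sturmian subshift with rotation number `α`: all two-sided sequences whose finite
subwords occur in some `s_n`. -/
def sturmΩ (α : ℝ) : Set (ℤ → Fin 2) :=
  {ω | ∀ (i : ℤ) (n : ℕ), ∃ m : ℕ, word ω i n <:+: sturmW α m}

/-- The positive cocycle of a map `A` over a transformation `T`: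
`cocycleH T A n ω = A(T^{n-1}ω) ⋯ A(ω)`. -/
def cocycleH {Ω : Type*} (T : Ω → Ω) (A : Ω → SL2) : ℕ → Ω → SL2
  | 0, _ => 1
  | n + 1, ω => A (T^[n] ω) * cocycleH T A n ω

end

/-!
Put `f n ω = log ‖A(n,ω)‖`. Since `log ‖·‖` is subadditive and `A(n+1,ω) = A(n,Tω) A(ω)`, the
functions `f (n + 1)` and `f n ∘ T` differ by a bounded amount. The averages `f n / n` are
continuous and converge pointwise, so by Baire's theorem they are eventually within `ε` of a single
constant on some nonempty open set `U`. By minimality and compactness, every forward orbit enters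
`U` before a time `R` independent of the starting point, and waiting for that moment changes `f n`
by a bounded amount, hence `f n / n` negligibly. The averages are thus eventually within `2ε` of the
same constant on all of `Ω`.
-/

section Limits

variable {X E : Type*} [PseudoMetricSpace E]

theorem exists_isOpen_eventually_dist_le [TopologicalSpace X] [BaireSpace X] [Nonempty X]
    {F : ℕ → X → E} (hF : ∀ n, Continuous (F n)) (hcauchy : ∀ x, CauchySeq fun n ↦ F n x)
    {ε : ℝ} (hε : 0 < ε) :
    ∃ c, ∃ U, IsOpen U ∧ U.Nonempty ∧ ∀ᶠ n in atTop, ∀ x ∈ U, dist (F n x) c ≤ ε := by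
  let K (N : ℕ) : Set X := {x | ∀ n ≥ N, dist (F n x) (F N x) ≤ ε / 2}
  have hK_closed (N : ℕ) : IsClosed (K N) := by
    simp only [K, Set.ofPred_forall]
    exact isClosed_biInter fun n _ ↦ isClosed_le ((hF n).dist (hF N)) continuous_const
  have hK_cover : ⋃ N, K N = Set.univ := Set.iUnion_eq_univ_iff.2 fun x ↦ by
    obtain ⟨N, hN⟩ := Metric.cauchySeq_iff'.1 (hcauchy x) (ε / 2) (half_pos hε)
    exact ⟨N, fun n hn ↦ (hN n hn).le⟩
  obtain ⟨N, x₀, hx₀⟩ := nonempty_interior_of_iUnion_of_closed hK_closed hK_cover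
  refine ⟨F N x₀, interior (K N) ∩ {x | dist (F N x) (F N x₀) < ε / 2},
    isOpen_interior.inter (isOpen_lt ((hF N).dist continuous_const) continuous_const),
    ⟨x₀, hx₀, by simpa using hε⟩, ?_⟩
  filter_upwards [eventually_ge_atTop N] with n hn x ⟨hxK, hx⟩
  calc dist (F n x) (F N x₀) ≤ dist (F n x) (F N x) + dist (F N x) (F N x₀) := dist_triangle _ _ _
    _ ≤ ε / 2 + ε / 2 := add_le_add (interior_subset hxK n hn) hx.le
    _ = ε := add_halves ε

theorem tendstoUniformly_const_of_eventually_dist_le {ι : Type*} {p : Filter ι} [p.NeBot]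
    {F : ι → X → E} {x₀ : X} {l : E} (hl : Tendsto (F · x₀) p (𝓝 l))
    (hF : ∀ ε > 0, ∃ c, ∀ᶠ i in p, ∀ x, dist (F i x) c ≤ ε) :
    TendstoUniformly F (fun _ ↦ l) p := by
  refine Metric.tendstoUniformly_iff.2 fun ε hε ↦ ?_
  obtain ⟨c, hc⟩ := hF (ε / 3) (by positivity)
  have hlc : dist l c ≤ ε / 3 :=
    le_of_tendsto (hl.dist tendsto_const_nhds) (hc.mono fun i hi ↦ hi x₀)
  filter_upwards [hc] with i hi x
  linarith [dist_triangle_right l (F i x) c, hi x]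

end Limits

section HittingTimes

variable {X : Type*} [TopologicalSpace X] [CompactSpace X]

theorem exists_hitting_time_le {T : X → X} (hT : Continuous T)
    (hdense : ∀ x, DenseRange fun n : ℕ ↦ T^[n] x) {U : Set X} (hU : IsOpen U)
    (hne : U.Nonempty) : ∃ R, ∀ x, ∃ k ≤ R, T^[k] x ∈ U := by
  obtain ⟨s, hs⟩ := isCompact_univ.elim_finite_subcover (fun n : ℕ ↦ T^[n] ⁻¹' U)
    (fun n ↦ hU.preimage (hT.iterate n))
    fun x _ ↦ Set.mem_iUnion.2 ((hdense x).exists_mem_open hU hne)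
  refine ⟨s.sup id, fun x ↦ ?_⟩
  obtain ⟨k, hks, hk⟩ := Set.mem_iUnion₂.1 (hs (Set.mem_univ x))
  exact ⟨k, Finset.le_sup (f := id) hks, hk⟩

theorem denseRange_iterate_of_denseRange_zpow (T : X ≃ₜ X)
    (hdense : ∀ x, DenseRange fun n : ℤ ↦ (T.toEquiv ^ n) x) (x : X) :
    DenseRange fun n : ℕ ↦ T^[n] x := by
  have hcont (n : ℤ) : Continuous (T.toEquiv ^ n) := by
    let toPerm : (X ≃ₜ X) →* Equiv.Perm X := ⟨⟨Homeomorph.toEquiv, rfl⟩, fun _ _ ↦ rfl⟩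
    have hpow : T.toEquiv ^ n = (T ^ n).toEquiv := (map_zpow toPerm T n).symm
    exact hpow ▸ (T ^ n).continuous
  refine dense_iff_inter_open.2 fun U hU hne ↦ ?_
  obtain ⟨s, hs⟩ := isCompact_univ.elim_finite_subcover (fun n : ℤ ↦ (T.toEquiv ^ n) ⁻¹' U)
    (fun n ↦ hU.preimage (hcont n))
    fun y _ ↦ Set.mem_iUnion.2 ((hdense y).exists_mem_open hU hne)
  -- Starting at `T ^ M x` makes all the finitely many exponents in `s` nonnegative.
  let M := s.sup Int.natAbs
  obtain ⟨n, hns, hn⟩ := Set.mem_iUnion₂.1 (hs (Set.mem_univ ((T.toEquiv ^ (M : ℤ)) x)))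
  have hnM : n.natAbs ≤ M := Finset.le_sup hns
  obtain ⟨k, hk⟩ := Int.eq_ofNat_of_zero_le (show 0 ≤ n + M by omega)
  rw [Set.mem_preimage, ← Equiv.Perm.mul_apply, ← zpow_add, hk, zpow_natCast,
    ← Equiv.Perm.iterate_eq_pow] at hn
  exact ⟨_, hn, k, rfl⟩

end HittingTimes

section AlmostInvariant

variable {X E : Type*} [SeminormedAddCommGroup E] {T : X → X} {f : ℕ → X → E} {B : ℝ}

theorem norm_sub_iterate_le (hB : ∀ n x, ‖f (n + 1) x - f n (T x)‖ ≤ B) (n k : ℕ) (x : X) :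
    ‖f (n + k) x - f n (T^[k] x)‖ ≤ k * B := by
  induction k generalizing x with
  | zero => simp
  | succ k ih =>
    calc ‖f (n + (k + 1)) x - f n (T^[k + 1] x)‖
        ≤ ‖f (n + k + 1) x - f (n + k) (T x)‖ + ‖f (n + k) (T x) - f n (T^[k] (T x))‖ :=
          norm_sub_le_norm_sub_add_norm_sub _ _ _
      _ ≤ B + k * B := add_le_add (hB _ _) (ih _)
      _ = (k + 1 : ℕ) * B := by push_cast; ring

theorem eventually_norm_le_of_hitting_time_le (hB : ∀ n x, ‖f (n + 1) x - f n (T x)‖ ≤ B)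
    {U : Set X} {R : ℕ} (hR : ∀ x, ∃ k ≤ R, T^[k] x ∈ U) {ε : ℝ} (hε : 0 < ε)
    (hU : ∀ᶠ n : ℕ in atTop, ∀ x ∈ U, ‖f n x‖ ≤ ε * n) :
    ∀ᶠ n : ℕ in atTop, ∀ x, ‖f n x‖ ≤ 2 * ε * n := by
  obtain ⟨N, hN⟩ := eventually_atTop.1 hU
  have hlarge : ∀ᶠ n : ℕ in atTop, R * B ≤ ε * n :=
    (tendsto_natCast_atTop_atTop.const_mul_atTop hε).eventually_ge_atTop _
  filter_upwards [hlarge, eventually_ge_atTop (N + R)] with n hn hnN x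
  have hB₀ : 0 ≤ B := (norm_nonneg _).trans (hB 0 x)
  obtain ⟨k, hkR, hk⟩ := hR x
  obtain ⟨m, rfl⟩ := Nat.exists_eq_add_of_le' (show k ≤ n by omega)
  calc ‖f (m + k) x‖ ≤ ‖f m (T^[k] x)‖ + ‖f (m + k) x - f m (T^[k] x)‖ :=
        norm_le_norm_add_norm_sub' _ _
    _ ≤ ε * m + k * B := add_le_add (hN m (by omega) _ hk) (norm_sub_iterate_le hB m k x)
    _ ≤ ε * (m + k : ℕ) + R * B := by gcongr; omega
    _ ≤ 2 * ε * (m + k : ℕ) := by linarith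

variable [NormedSpace ℝ E]

theorem dist_inv_smul_le_iff {r ε : ℝ} (hr : 0 < r) (v c : E) :
    dist (r⁻¹ • v) c ≤ ε ↔ ‖v - r • c‖ ≤ ε * r := by
  rw [dist_eq_norm, show r⁻¹ • v - c = r⁻¹ • (v - r • c) by rw [smul_sub, inv_smul_smul₀ hr.ne'],
    norm_smul, Real.norm_of_nonneg (inv_nonneg.2 hr.le), inv_mul_le_iff₀ hr, mul_comm]

theorem eventually_dist_inv_smul_le (hB : ∀ n x, ‖f (n + 1) x - f n (T x)‖ ≤ B)
    {U : Set X} {R : ℕ} (hR : ∀ x, ∃ k ≤ R, T^[k] x ∈ U) {c : E} {ε : ℝ} (hε : 0 < ε)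
    (hU : ∀ᶠ n : ℕ in atTop, ∀ x ∈ U, dist ((n : ℝ)⁻¹ • f n x) c ≤ ε) :
    ∀ᶠ n : ℕ in atTop, ∀ x, dist ((n : ℝ)⁻¹ • f n x) c ≤ 2 * ε := by
  have hpos : ∀ᶠ n : ℕ in atTop, (0 : ℝ) < n :=
    (eventually_gt_atTop 0).mono fun n hn ↦ Nat.cast_pos.2 hn
  have hBc (n : ℕ) (x : X) :
      ‖(f (n + 1) x - ((n + 1 : ℕ) : ℝ) • c) - (f n (T x) - (n : ℝ) • c)‖ ≤ B + ‖c‖ := by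
    have hsplit : (f (n + 1) x - ((n + 1 : ℕ) : ℝ) • c) - (f n (T x) - (n : ℝ) • c) =
        (f (n + 1) x - f n (T x)) - c := by
      push_cast
      module
    exact hsplit ▸ (norm_sub_le _ _).trans (add_le_add_left (hB n x) _)
  have hU' : ∀ᶠ n : ℕ in atTop, ∀ x ∈ U, ‖f n x - (n : ℝ) • c‖ ≤ ε * n := by
    filter_upwards [hU, hpos] with n hn hn₀ x hx using (dist_inv_smul_le_iff hn₀ _ _).1 (hn x hx)
  filter_upwards [eventually_norm_le_of_hitting_time_le hBc hR hε hU', hpos] with n hn hn₀ x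
    using (dist_inv_smul_le_iff hn₀ _ _).2 (hn x)

theorem exists_tendstoUniformly_inv_smul [TopologicalSpace X] [CompactSpace X] [BaireSpace X]
    (hT : Continuous T) (hdense : ∀ x, DenseRange fun n : ℕ ↦ T^[n] x)
    (hf : ∀ n, Continuous (f n)) (hB : ∀ n x, ‖f (n + 1) x - f n (T x)‖ ≤ B)
    (hlim : ∀ x, ∃ l, Tendsto (fun n : ℕ ↦ (n : ℝ)⁻¹ • f n x) atTop (𝓝 l)) :
    ∃ l, TendstoUniformly (fun (n : ℕ) x ↦ (n : ℝ)⁻¹ • f n x) (fun _ ↦ l) atTop := by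
  rcases isEmpty_or_nonempty X with _ | ⟨⟨x₀⟩⟩
  · exact ⟨0, fun _ _ ↦ .of_forall fun _ ↦ isEmptyElim⟩
  obtain ⟨l, hl⟩ := hlim x₀
  refine ⟨l, tendstoUniformly_const_of_eventually_dist_le hl fun ε hε ↦ ?_⟩
  have : Nonempty X := ⟨x₀⟩
  obtain ⟨c, U, hU, hne, hUc⟩ := exists_isOpen_eventually_dist_le
    (fun n ↦ (hf n).const_smul ((n : ℝ)⁻¹)) (fun x ↦ (hlim x).choose_spec.cauchySeq) (half_pos hε)
  obtain ⟨R, hR⟩ := exists_hitting_time_le hT hdense hU hne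
  refine ⟨c, ?_⟩
  simpa only [mul_div_cancel₀ ε two_ne_zero] using
    eventually_dist_inv_smul_le hB hR (half_pos hε) hUc

end AlmostInvariant

section OrbitProducts

variable {X G : Type*}

/-- The product `A (T^[n - 1] x) * ⋯ * A (T x) * A x` of the values of `A` along the first `n`
points of the orbit of `x`, i.e. the cocycle over `T` generated by `A`. It is `cocycleH` with values
in an arbitrary monoid. -/
def orbitProd [Monoid G] (T : X → X) (A : X → G) : ℕ → X → G
  | 0, _ => 1
  | n + 1, x => A (T^[n] x) * orbitProd T A n x

theorem orbitProd_succ' [Monoid G] (T : X → X) (A : X → G) (n : ℕ) (x : X) :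
    orbitProd T A (n + 1) x = orbitProd T A n (T x) * A x := by
  induction n with
  | zero => simp [orbitProd]
  | succ n ih => rw [orbitProd, ih, orbitProd, mul_assoc, Function.iterate_succ_apply]

theorem continuous_orbitProd [Monoid G] [TopologicalSpace G] [ContinuousMul G]
    [TopologicalSpace X] {T : X → X} (hT : Continuous T) {A : X → G} (hA : Continuous A) (n : ℕ) :
    Continuous (orbitProd T A n) := by
  induction n with
  | zero => exact continuous_const
  | succ n ih => exact (hA.comp (hT.iterate n)).mul ih

theorem abs_map_mul_sub_le [Group G] {L : G → ℝ} (hL : ∀ g h, L (g * h) ≤ L g + L h) (g h : G) :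
    |L (g * h) - L g| ≤ |L h| + |L h⁻¹| := by
  have hupper : L (g * h) ≤ L g + L h := hL g h
  have hlower : L g ≤ L (g * h) + L h⁻¹ := by simpa using hL (g * h) h⁻¹
  rw [abs_le]
  constructor <;>
    linarith [le_abs_self (L h), le_abs_self (L h⁻¹), abs_nonneg (L h), abs_nonneg (L h⁻¹)]

theorem statement1_general [TopologicalSpace X] [CompactSpace X] [BaireSpace X]
    [Group G] [TopologicalSpace G] [IsTopologicalGroup G] {T : X → X} (hT : Continuous T)
    (hdense : ∀ x, DenseRange fun n : ℕ ↦ T^[n] x) {L : G → ℝ} (hL : Continuous L)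
    (hL_mul : ∀ g h, L (g * h) ≤ L g + L h) {A : X → G} (hA : Continuous A)
    (hlim : ∀ x, ∃ l, Tendsto (fun n : ℕ ↦ L (orbitProd T A n x) / n) atTop (𝓝 l)) :
    ∃ Λ, TendstoUniformly (fun (n : ℕ) x ↦ L (orbitProd T A n x) / n) (fun _ ↦ Λ) atTop := by
  have hbound : Continuous fun x ↦ |L (A x)| + |L (A x)⁻¹| :=
    (hL.comp hA).abs.add (hL.comp hA.inv).abs
  obtain ⟨B, hB⟩ := isCompact_univ.bddAbove_image hbound.continuousOn
  simp only [div_eq_inv_mul] at hlim ⊢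
  refine exists_tendstoUniformly_inv_smul (B := B) hT hdense
    (fun n ↦ hL.comp (continuous_orbitProd hT hA n)) (fun n x ↦ ?_) hlim
  rw [orbitProd_succ']
  exact (abs_map_mul_sub_le hL_mul _ _).trans (hB ⟨x, trivial, rfl⟩)

end OrbitProducts

section SL2

open scoped Matrix.Norms.L2Operator

theorem slNorm_eq_norm (M : SL2) : slNorm M = ‖(M : Matrix (Fin 2) (Fin 2) ℝ)‖ := rfl

theorem slNorm_pos (M : SL2) : 0 < slNorm M := by
  rw [slNorm_eq_norm, norm_pos_iff]
  exact fun hM ↦ M.row_ne_zero 0 (congrFun hM 0)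

theorem slNorm_mul_le (M N : SL2) : slNorm (M * N) ≤ slNorm M * slNorm N := by
  simpa only [slNorm_eq_norm, Matrix.SpecialLinearGroup.coe_mul] using norm_mul_le _ _

theorem log_slNorm_mul_le (M N : SL2) :
    Real.log (slNorm (M * N)) ≤ Real.log (slNorm M) + Real.log (slNorm N) := by
  rw [← Real.log_mul (slNorm_pos M).ne' (slNorm_pos N).ne']
  exact Real.log_le_log (slNorm_pos _) (slNorm_mul_le M N)

theorem continuous_log_slNorm : Continuous fun M : SL2 ↦ Real.log (slNorm M) :=
  (continuous_norm.comp continuous_subtype_val).log fun M ↦ (slNorm_pos M).ne'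

theorem cocycleH_eq_orbitProd {Ω : Type*} (T : Ω → Ω) (A : Ω → SL2) :
    cocycleH T A = orbitProd T A := by
  ext1 n
  induction n with
  | zero => rfl
  | succ n ih => ext1 x; rw [cocycleH, orbitProd, ih]

end SL2

/-- Over a compact metric minimal system, a continuous `SL(2,ℝ)`-valued
function whose Lyapunov limit exists at every point is uniform. -/
theorem statement1 {Ω : Type*} [MetricSpace Ω] [CompactSpace Ω] (T : Ω ≃ₜ Ω)
    (hmin : ∀ ω ρ : Ω, ρ ∈ closure (Set.range fun n : ℤ => (T.toEquiv ^ n) ω))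
    (A : Ω → SL2) (hA : Continuous fun ω => (A ω : Matrix (Fin 2) (Fin 2) ℝ))
    (hex : ∀ ω : Ω, ∃ l : ℝ, Filter.Tendsto
      (fun n : ℕ => Real.log (slNorm (cocycleH (⇑T) A n ω)) / n) Filter.atTop (nhds l)) :
    ∃ Λ : ℝ, TendstoUniformly
      (fun (n : ℕ) (ω : Ω) => Real.log (slNorm (cocycleH (⇑T) A n ω)) / n)
      (fun _ => Λ) Filter.atTop := by
  simp only [cocycleH_eq_orbitProd] at hex ⊢
  exact statement1_general T.continuous (denseRange_iterate_of_denseRange_zpow T hmin)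
    continuous_log_slNorm log_slNorm_mul_le (continuous_induced_rng.2 hA) hex
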